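/- For every T ⊆ 𝔹 and every β ∈ 𝔹(T), there is an integer δ ≥ 0 such that L_{T,f_β,β}(f_β(T)) = −2·p^{n_β+δ}; in particular L_{T,f_β,β}(f_β(T)) < 0 and f_β(T) ∉ 𝒟_{T,f_β}. -/

import Mathlib

/- Setting: `B` is the finite nonempty set 𝔹 equipped with a permutation `σ` (Frobenius),
and `p` is a prime.  Weights live in `ℚ^𝔹 = (B → ℚ)`.  The orbits `𝔹_𝔭` of `σ` are the sets
`orbit σ β`, and for `T ⊆ 𝔹` we have `T_𝔭 = T ∩ orbit σ β`. -/

open scoped Classical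

noncomputable section

namespace GO

variable {B : Type*} [Fintype B] [DecidableEq B]

/-- The standard basis vector `e_β` of `ℚ^𝔹`. -/
def e (β : B) : B → ℚ := fun τ => if τ = β then 1 else 0

/-- `β'` lies in the `σ`-orbit of `β`. -/
def sameOrbit (σ : Equiv.Perm B) (β β' : B) : Prop := ∃ n : ℕ, (σ ^ n) β = β'

/-- The `σ`-orbit `𝔹_𝔭` of `β`. -/
def orbit (σ : Equiv.Perm B) (β : B) : Set B := {τ | sameOrbit σ β τ}

/-- `|𝔹_𝔭|`, the cardinality of the orbit of `β`. -/
def orbitCard (σ : Equiv.Perm B) (β : B) : ℕ := (orbit σ β).ncard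

/-- For `β`, `β'` in the same orbit: the unique `n` with `0 < n ≤ |𝔹_𝔭|` and `σ^n β' = β`,
realized as the least positive `n` with `σ^n β' = β`. -/
def steps (σ : Equiv.Perm B) (β' β : B) : ℕ := sInf {n : ℕ | 0 < n ∧ (σ ^ n) β' = β}

/-- For `β`, `β'` in the same orbit: the unique `n` with `0 ≤ n < |𝔹_𝔭|` and `σ^n β = β'`. -/
def steps0 (σ : Equiv.Perm B) (β β' : B) : ℕ := sInf {n : ℕ | (σ ^ n) β = β'}

/-- `h_β^{β'} = -e_β + p^n e_{β'}` where `β = σ^n β'` with `0 < n ≤ |𝔹_𝔭|`. -/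
def hvec (σ : Equiv.Perm B) (p : ℕ) (β β' : B) : B → ℚ :=
  -(e β) + ((p : ℚ) ^ steps σ β' β) • e β'

/-- `b_β^{β'} = e_β + p^n e_{β'}` where `β = σ^n β'` with `0 < n ≤ |𝔹_𝔭|`. -/
def bvec (σ : Equiv.Perm B) (p : ℕ) (β β' : B) : B → ℚ :=
  (e β) + ((p : ℚ) ^ steps σ β' β) • e β'

/-- `h_β = -e_β + p e_{σ⁻¹ β}`. -/
def hsimple (σ : Equiv.Perm B) (p : ℕ) (β : B) : B → ℚ := -(e β) + (p : ℚ) • e (σ⁻¹ β)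

/-- `b_β = e_β + p e_{σ⁻¹ β}`. -/
def bsimple (σ : Equiv.Perm B) (p : ℕ) (β : B) : B → ℚ := (e β) + (p : ℚ) • e (σ⁻¹ β)

/-- The `ℚ^{≥0}`-cone generated by a set `S` of vectors: all finite nonnegative rational
linear combinations of elements of `S`. -/
def cone {V : Type*} [AddCommMonoid V] [Module ℚ V] (S : Set V) : Set V :=
  {x | ∃ (n : ℕ) (c : Fin n → ℚ) (v : Fin n → V),
    (∀ i, 0 ≤ c i) ∧ (∀ i, v i ∈ S) ∧ x = ∑ i, c i • v i}

/-- A chain in `T` (automatically contained in a single orbit, so this is the notion of a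
chain in `T_𝔭` for `T_𝔭 ⊊ 𝔹_𝔭`): `C = {σ^{-i}β : 0 ≤ i ≤ m} ⊆ T` with `σβ ∉ T` and
`σ^{-m-1}β ∉ T`. -/
def IsChainIn (σ : Equiv.Perm B) (T : Set B) (C : Set B) : Prop :=
  ∃ (β : B) (m : ℕ), σ β ∉ T ∧ (σ⁻¹ ^ (m + 1)) β ∉ T ∧
    (∀ i ≤ m, (σ⁻¹ ^ i) β ∈ T) ∧ C = {τ | ∃ i ≤ m, τ = (σ⁻¹ ^ i) β}

/-- `C̃` for a chain `C`: equals `C` if `m` is odd (i.e. `|C| = m+1` is even), and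
`C ∪ {σ^{-m-1}β} = C ∪ σ⁻¹(C)` if `m` is even (i.e. `|C|` odd). -/
def chainExt (σ : Equiv.Perm B) (C : Set B) : Set B :=
  if Odd C.ncard then C ∪ (⇑σ⁻¹ '' C) else C

/-- `T̃ = ⋃_𝔭 T̃_𝔭`: the union of `T` with the extensions `C̃` of all chains `C` in `T`.
(For orbits with `T_𝔭 = 𝔹_𝔭` there are no chains and `T̃_𝔭 = 𝔹_𝔭 = T_𝔭`.) -/
def tilde (σ : Equiv.Perm B) (T : Set B) : Set B :=
  T ∪ ⋃ (C : Set B) (_ : IsChainIn σ T C), chainExt σ C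

/-- `μ_β`: the least `i > 0` with `σ^i β ∉ T` if `T_𝔭 ≠ 𝔹_𝔭`, and `0` if `T_𝔭 = 𝔹_𝔭`. -/
def mu (σ : Equiv.Perm B) (T : Set B) (β : B) : ℕ :=
  if orbit σ β ⊆ T then 0 else sInf {i : ℕ | 0 < i ∧ (σ ^ i) β ∉ T}

/-- `n_β`: the least `i > 0` with `σ^i β ∉ T̃` (meaningful when `T̃_𝔭 ≠ 𝔹_𝔭`). -/
def nn (σ : Equiv.Perm B) (T : Set B) (β : B) : ℕ :=
  sInf {i : ℕ | 0 < i ∧ (σ ^ i) β ∉ tilde σ T}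

/-- `ν_β`: the least `i ≥ 0` with `σ^{-i} β ∉ T` (meaningful when `T_𝔭 ≠ 𝔹_𝔭`). -/
def nu (σ : Equiv.Perm B) (T : Set B) (β : B) : ℕ :=
  sInf {i : ℕ | (σ⁻¹ ^ i) β ∉ T}

/-- `𝒯(T_𝔭) = (𝔹_𝔭 − T̃_𝔭) ∪ σ(T̃_𝔭 − T_𝔭)`, taken globally (union over all `𝔭`). -/
def Tscr (σ : Equiv.Perm B) (T : Set B) : Set B :=
  (tilde σ T)ᶜ ∪ (⇑σ '' (tilde σ T \ T))

/-- The generating set `⋃_𝔭 𝒢(T_𝔭)`: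
`{h_β^{β'} : β ∈ ℋ(T_𝔭), β' ∈ 𝒯(T_𝔭)} ∪ {±b_β : β ∈ T_𝔭}` over all `𝔭`. -/
def Dgen (σ : Equiv.Perm B) (p : ℕ) (T : Set B) : Set (B → ℚ) :=
  {v | ∃ β β', β ∉ T ∧ β' ∈ Tscr σ T ∧ sameOrbit σ β β' ∧ v = hvec σ p β β'}
  ∪ {v | ∃ β ∈ T, v = bsimple σ p β ∨ v = -(bsimple σ p β)}

/-- The cone `𝒟_T`. -/
def D (σ : Equiv.Perm B) (p : ℕ) (T : Set B) : Set (B → ℚ) := cone (Dgen σ p T)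

/-- `h_{σ^{n_β}β}^{β} = -e_{σ^{n_β}β} + p^{n_β} e_β`. -/
def fH (σ : Equiv.Perm B) (p : ℕ) (T : Set B) (β : B) : B → ℚ :=
  -(e ((σ ^ nn σ T β) β)) + ((p : ℚ) ^ nn σ T β) • e β

/-- `b_{σ^{n_β}β}^{β} = e_{σ^{n_β}β} + p^{n_β} e_β`. -/
def fB (σ : Equiv.Perm B) (p : ℕ) (T : Set B) (β : B) : B → ℚ :=
  (e ((σ ^ nn σ T β) β)) + ((p : ℚ) ^ nn σ T β) • e β

/-- The generating set `⋃_𝔭 𝒢′(T_𝔭)`: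
if `𝔹_𝔭 − T̃_𝔭 ≠ ∅` it is `{h_{σ^{n_β}β}^β : β ∈ 𝔹_𝔭 − T̃_𝔭} ∪ {−b_{σ^{n_β}β}^β : β ∈ T̃_𝔭 − T_𝔭}
∪ {±b_β : β ∈ T_𝔭}`, and if `𝔹_𝔭 = T̃_𝔭` it is `{−e_β : β ∈ 𝔹_𝔭 − T_𝔭} ∪ {±b_β : β ∈ T_𝔭}`. -/
def D'gen (σ : Equiv.Perm B) (p : ℕ) (T : Set B) : Set (B → ℚ) :=
  {v | ∃ β, β ∉ tilde σ T ∧ v = fH σ p T β}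
  ∪ {v | ∃ β, β ∈ tilde σ T ∧ β ∉ T ∧ ¬ orbit σ β ⊆ tilde σ T ∧ v = -(fB σ p T β)}
  ∪ {v | ∃ β, β ∉ T ∧ orbit σ β ⊆ tilde σ T ∧ v = -(e β)}
  ∪ {v | ∃ β ∈ T, v = bsimple σ p β ∨ v = -(bsimple σ p β)}

/-- The cone `𝒟′_T`. -/
def D' (σ : Equiv.Perm B) (p : ℕ) (T : Set B) : Set (B → ℚ) := cone (D'gen σ p T)

/-- `f_β(T)` for `β ∉ T`: `h_{σ^{n_β}β}^β` if `β ∈ 𝔹_𝔭 − T̃_𝔭`; `−b_{σ^{n_β}β}^β` if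
`β ∈ T̃_𝔭 − T_𝔭` and `𝔹_𝔭 ≠ T̃_𝔭`; and `−(1+p^{|𝔹_𝔭|}) e_β` if `𝔹_𝔭 = T̃_𝔭`. -/
def fvec (σ : Equiv.Perm B) (p : ℕ) (T : Set B) (β : B) : B → ℚ :=
  if orbit σ β ⊆ tilde σ T then -((1 + (p : ℚ) ^ orbitCard σ β) • e β)
  else if β ∈ tilde σ T then -(fB σ p T β) else fH σ p T β

/-- `𝔹(T) = ⋃_𝔭 𝔹_𝔭(T)`: `β ∈ 𝔹(T)` iff `β ∉ T`, the set `𝔹_𝔭 − T̃_𝔭` is nonempty, and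
`𝔹_𝔭 − T̃_𝔭 ≠ {β}` (this encodes all three cases of the definition of `𝔹_𝔭(T)`). -/
def BT (σ : Equiv.Perm B) (T : Set B) : Set B :=
  {β | β ∉ T ∧ (orbit σ β \ tilde σ T).Nonempty ∧ orbit σ β \ tilde σ T ≠ {β}}

/-- The sign function `ε_T : 𝔹 → {−1,0,1}`. -/
def epsT (σ : Equiv.Perm B) (T : Set B) (β : B) : ℚ :=
  if orbit σ β ⊆ T then 0
  else if β ∈ tilde σ T then (-1 : ℚ) ^ (mu σ T β - 1) else 1

/-- `L^ε[β, β'](κ) = Σ_{0 ≤ i ≤ n} ε(σ^iβ) p^i k_{σ^iβ}`, where `β' = σ^n β` with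
`0 ≤ n < |𝔹_𝔭|`. -/
def Lfun (σ : Equiv.Perm B) (p : ℕ) (ε : B → ℚ) (β β' : B) (κ : B → ℚ) : ℚ :=
  ∑ i ∈ Finset.range (steps0 σ β β' + 1), ε ((σ ^ i) β) * (p : ℚ) ^ i * κ ((σ ^ i) β)

/-- `L^ε[β] = L^ε[β, σ⁻¹β]`. -/
def Lfun1 (σ : Equiv.Perm B) (p : ℕ) (ε : B → ℚ) (β : B) (κ : B → ℚ) : ℚ :=
  Lfun σ p ε β (σ⁻¹ β) κ

/-- `L_{T,β}` for `β ∈ 𝔹 − T`: `L^{ε_T}[σ^{μ_β}β]` if `β ∈ 𝔹 − T̃`, and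
`L^{ε_T}[β, σ^{μ_β−1}β]` if `β ∈ T̃ − T`. -/
def LT (σ : Equiv.Perm B) (p : ℕ) (T : Set B) (β : B) (κ : B → ℚ) : ℚ :=
  if β ∈ tilde σ T then Lfun σ p (epsT σ T) β ((σ ^ (mu σ T β - 1)) β) κ
  else Lfun1 σ p (epsT σ T) ((σ ^ mu σ T β) β) κ

/-- `ε_{T,f_β}`: negates `ε_T` on `{β, σβ, …, σ^{μ_β−1}β}`. -/
def epsTf (σ : Equiv.Perm B) (T : Set B) (β τ : B) : ℚ :=
  if ∃ i < mu σ T β, τ = (σ ^ i) β then -(epsT σ T τ) else epsT σ T τ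

/-- `L_{T,f_β,τ}` for `β ∈ 𝔹(T)` and `τ ∈ 𝔹 − (T ∪ {σ^{n_β}β})`, with `β′ = σ^{n_β}β` and
`β̃ = σ^{μ_{β′}}β′`. -/
def LTf (σ : Equiv.Perm B) (p : ℕ) (T : Set B) (β τ : B) (κ : B → ℚ) : ℚ :=
  if τ = β then
    (if β ∈ tilde σ T then
      Lfun1 σ p (epsTf σ T β) ((σ ^ mu σ T ((σ ^ nn σ T β) β)) ((σ ^ nn σ T β) β)) κ
    else
      Lfun σ p (epsTf σ T β) β (σ⁻¹ ((σ ^ mu σ T ((σ ^ nn σ T β) β)) ((σ ^ nn σ T β) β))) κ)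
  else
    (if τ ∈ tilde σ T then LT σ p T τ κ
     else Lfun1 σ p (epsTf σ T β) ((σ ^ mu σ T τ) τ) κ)

/-- `𝒟_{T,f_β} = {κ : L_{T,f_β,τ}(κ) ≥ 0 for all τ ∈ 𝔹 − (T ∪ {σ^{n_β}β})}`. -/
def Df (σ : Equiv.Perm B) (p : ℕ) (T : Set B) (β : B) : Set (B → ℚ) :=
  {κ | ∀ τ, τ ∉ T → τ ≠ (σ ^ nn σ T β) β → 0 ≤ LTf σ p T β τ κ}

/-- `i_T : ℚ^𝔹 → ℚ^{𝔹−T}`, the linear map with `i_T(e_β) = 0` if `T_𝔭 = 𝔹_𝔭` and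
`i_T(e_β) = (−p)^{ν_β} e_{σ^{−ν_β}β}` otherwise. -/
def iT (σ : Equiv.Perm B) (p : ℕ) (T : Set B) (κ : B → ℚ) : {β : B // β ∉ T} → ℚ :=
  fun β₀ => ∑ β : B, κ β *
    (if orbit σ β ⊆ T then 0
     else if (σ⁻¹ ^ nu σ T β) β = β₀.1 then (-(p : ℚ)) ^ nu σ T β else 0)

/-- Restriction to `ℚ^{𝔹−T}` of a vector of `ℚ^𝔹` (used for vectors supported on `𝔹 − T`). -/
def res (T : Set B) (v : B → ℚ) : {β : B // β ∉ T} → ℚ := fun β => v β.1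

/-- The generating set `𝒢^{T-red}(T) = ⋃_𝔭 𝒢_𝔭^{T-red}(T)` of the reduced cone. -/
def Gred (σ : Equiv.Perm B) (p : ℕ) (T : Set B) : Set ({β : B // β ∉ T} → ℚ) :=
  {v | ∃ β, β ∉ tilde σ T ∧ v = res T (fH σ p T β)}
  ∪ {v | ∃ β, β ∈ tilde σ T ∧ β ∉ T ∧ ¬ orbit σ β ⊆ tilde σ T ∧ v = res T (-(fB σ p T β))}
  ∪ {v | ∃ β, β ∉ T ∧ orbit σ β ⊆ tilde σ T ∧ v = res T (-(e β))}

/-- The minimal cone `𝒞^min_T = i_T(𝒟_T ∩ ⋂_{β ∈ 𝔹(T)} 𝒟_{T,f_β}) ⊆ ℚ^{𝔹−T}`. -/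
def Cmin (σ : Equiv.Perm B) (p : ℕ) (T : Set B) : Set ({β : B // β ∉ T} → ℚ) :=
  iT σ p T '' (D σ p T ∩ {κ | ∀ β ∈ BT σ T, κ ∈ Df σ p T β})

/-- `g_β`: `b_β` if `β ∈ T_𝔭`; `−e_β` if `β ∈ T̃_𝔭 − T_𝔭` and `𝔹_𝔭 = T̃_𝔭`;
`−b_{σ^{n_β}β}^β` if `β ∈ T̃_𝔭 − T_𝔭` and `𝔹_𝔭 ≠ T̃_𝔭`; `h_{σ^{n_β}β}^β` if `β ∈ 𝔹_𝔭 − T̃_𝔭`. -/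
def gvec (σ : Equiv.Perm B) (p : ℕ) (T : Set B) (β : B) : B → ℚ :=
  if β ∈ T then bsimple σ p β
  else if orbit σ β ⊆ tilde σ T then -(e β)
  else if β ∈ tilde σ T then -(fB σ p T β)
  else fH σ p T β

/-- The map `σ̄ : β ↦ σ^{n_β} β`. -/
def sigbar (σ : Equiv.Perm B) (T : Set B) (β : B) : B := (σ ^ nn σ T β) β

/-- `h_β = -e_β + p e_{σ⁻¹β}` as an element of `ℤ^𝔹`. -/
def hZ (σ : Equiv.Perm B) (p : ℕ) (β : B) : B → ℤ :=
  fun τ => (if τ = β then -1 else 0) + (if τ = σ⁻¹ β then (p : ℤ) else 0)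

end GO

end

/-!
On a vector supported at `β` and `β' = σ^{n_β}β`, the functional `L^ε[x, y]` only sees the values
of `ε` at these two points. Starting at `x` with `β = σ^a x`, it takes the value
`p^{n_β+a} (ε(β) - ε(β'))` on `h_{β'}^β` and `-p^{n_β+a} (ε(β) + ε(β'))` on `-b_{β'}^β`.
As `β' ∉ T̃` lies beyond the segment on which `ε_T` is negated, `ε_{T,f_β}(β') = 1`.
If `β ∉ T̃`, then `ε_{T,f_β}(β) = -1` and the functional starts at `β`, so `δ = 0`.
If `β ∈ T̃ - T`, then `β` immediately precedes a chain of odd length `μ_β - 1`, so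
`ε_{T,f_β}(β) = 1`; the functional starts at `β̃`, so `δ` is the distance from `β̃` to `β`.
-/

namespace GO

variable {B : Type*} {σ : Equiv.Perm B} {T : Set B} {x β : B}

section PermPowers

lemma pow_minimalPeriod_apply (σ : Equiv.Perm B) (x : B) :
    (σ ^ Function.minimalPeriod σ x) x = x := by
  rw [← Equiv.Perm.iterate_eq_pow, Function.iterate_minimalPeriod]

lemma pow_mod_minimalPeriod_apply (σ : Equiv.Perm B) (x : B) (n : ℕ) :
    (σ ^ (n % Function.minimalPeriod σ x)) x = (σ ^ n) x := by
  simp only [← Equiv.Perm.iterate_eq_pow, Function.iterate_mod_minimalPeriod_eq]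

lemma pow_apply_eq_pow_apply_iff_of_lt_minimalPeriod {m n : ℕ}
    (hm : m < Function.minimalPeriod σ x) (hn : n < Function.minimalPeriod σ x) :
    (σ ^ m) x = (σ ^ n) x ↔ m = n := by
  simp only [← Equiv.Perm.iterate_eq_pow,
    Function.iterate_eq_iterate_iff_of_lt_minimalPeriod hm hn]

lemma minimalPeriod_pow_apply (hx : x ∈ Function.periodicPts σ) (n : ℕ) :
    Function.minimalPeriod σ ((σ ^ n) x) = Function.minimalPeriod σ x := by
  rw [← Equiv.Perm.iterate_eq_pow, Function.minimalPeriod_apply_iterate hx]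

lemma pow_minimalPeriod_sub_apply {n : ℕ} (hn : n ≤ Function.minimalPeriod σ x) :
    (σ ^ (Function.minimalPeriod σ x - n)) ((σ ^ n) x) = x := by
  rw [← Equiv.Perm.mul_apply, ← pow_add, Nat.sub_add_cancel hn, pow_minimalPeriod_apply]

lemma inv_pow_apply_of_pos (σ : Equiv.Perm B) (x : B) {n : ℕ} (hn : 0 < n) :
    σ⁻¹ ((σ ^ n) x) = (σ ^ (n - 1)) x := by
  rw [Equiv.Perm.inv_eq_iff_eq, ← Equiv.Perm.mul_apply, ← pow_succ', Nat.sub_add_cancel hn]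

lemma pow_inv_pow_apply_of_le (σ : Equiv.Perm B) (x : B) {m n : ℕ} (h : m ≤ n) :
    (σ ^ m) ((σ⁻¹ ^ n) x) = (σ⁻¹ ^ (n - m)) x := by
  obtain ⟨k, rfl⟩ := Nat.exists_eq_add_of_le h
  rw [← Equiv.Perm.mul_apply, pow_add, inv_pow σ m, mul_inv_cancel_left, Nat.add_sub_cancel_left]

lemma steps0_pow_apply {n : ℕ} (hn : n < Function.minimalPeriod σ x) :
    steps0 σ x ((σ ^ n) x) = n := by
  have hmem : n ∈ {m : ℕ | (σ ^ m) x = (σ ^ n) x} := rfl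
  have hle : steps0 σ x ((σ ^ n) x) ≤ n := Nat.sInf_le hmem
  exact (pow_apply_eq_pow_apply_iff_of_lt_minimalPeriod (hle.trans_lt hn) hn).1
    (Nat.sInf_mem ⟨n, hmem⟩)

end PermPowers

section Gaps

lemma mu_eq_sInf {k : ℕ} (h : (σ ^ k) x ∉ T) :
    mu σ T x = sInf {i : ℕ | 0 < i ∧ (σ ^ i) x ∉ T} :=
  if_neg fun hsub => h (hsub ⟨k, rfl⟩)

lemma mu_pos {k : ℕ} (hk : 0 < k) (h : (σ ^ k) x ∉ T) : 0 < mu σ T x := by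
  rw [mu_eq_sInf h]
  exact (Nat.sInf_mem (s := {i : ℕ | 0 < i ∧ (σ ^ i) x ∉ T}) ⟨k, hk, h⟩).1

lemma mu_le {k : ℕ} (hk : 0 < k) (h : (σ ^ k) x ∉ T) : mu σ T x ≤ k := by
  rw [mu_eq_sInf h]
  exact Nat.sInf_le ⟨hk, h⟩

lemma mu_eq_of_forall_mem {k : ℕ} (hk : 0 < k) (h : (σ ^ k) x ∉ T)
    (hmem : ∀ i, 0 < i → i < k → (σ ^ i) x ∈ T) : mu σ T x = k := by
  rw [mu_eq_sInf h]
  exact IsLeast.csInf_eq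
    ⟨⟨hk, h⟩, fun i hi => not_lt.1 fun hik => hi.2 (hmem i hi.1 hik)⟩

lemma exists_pow_apply_notMem_tilde (hper : β ∈ Function.periodicPts σ) (hβ : β ∈ BT σ T) :
    ∃ j, 0 < j ∧ j < Function.minimalPeriod σ β ∧ (σ ^ j) β ∉ tilde σ T := by
  obtain ⟨-, hne, hne_singleton⟩ := hβ
  obtain ⟨y, ⟨⟨k, rfl⟩, hy⟩, hyβ⟩ : ∃ y ∈ orbit σ β \ tilde σ T, y ≠ β := by
    by_contra! hall
    exact hne_singleton (Set.eq_singleton_iff_nonempty_unique_mem.2 ⟨hne, hall⟩)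
  rw [← pow_mod_minimalPeriod_apply] at hy hyβ
  refine ⟨_, Nat.pos_of_ne_zero fun h0 => hyβ ?_,
    Nat.mod_lt _ (Function.minimalPeriod_pos_of_mem_periodicPts hper), hy⟩
  rw [h0, pow_zero, Equiv.Perm.one_apply]

lemma nn_mem (hper : β ∈ Function.periodicPts σ) (hβ : β ∈ BT σ T) :
    nn σ T β ∈ {i : ℕ | 0 < i ∧ (σ ^ i) β ∉ tilde σ T} :=
  have ⟨j, hj, _, hjT⟩ := exists_pow_apply_notMem_tilde hper hβ
  Nat.sInf_mem ⟨j, hj, hjT⟩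

lemma nn_pos (hper : β ∈ Function.periodicPts σ) (hβ : β ∈ BT σ T) : 0 < nn σ T β :=
  (nn_mem hper hβ).1

lemma pow_nn_apply_notMem_tilde (hper : β ∈ Function.periodicPts σ) (hβ : β ∈ BT σ T) :
    (σ ^ nn σ T β) β ∉ tilde σ T :=
  (nn_mem hper hβ).2

lemma pow_nn_apply_notMem (hper : β ∈ Function.periodicPts σ) (hβ : β ∈ BT σ T) :
    (σ ^ nn σ T β) β ∉ T :=
  fun h => pow_nn_apply_notMem_tilde hper hβ (Or.inl h)

lemma nn_lt_minimalPeriod (hper : β ∈ Function.periodicPts σ) (hβ : β ∈ BT σ T) :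
    nn σ T β < Function.minimalPeriod σ β :=
  have ⟨j, hj, hjd, hjT⟩ := exists_pow_apply_notMem_tilde hper hβ
  have hle : nn σ T β ≤ j := Nat.sInf_le ⟨hj, hjT⟩
  hle.trans_lt hjd

lemma pow_nn_apply_ne (hper : β ∈ Function.periodicPts σ) (hβ : β ∈ BT σ T) :
    (σ ^ nn σ T β) β ≠ β := fun h =>
  (nn_pos hper hβ).ne' <|
    (pow_apply_eq_pow_apply_iff_of_lt_minimalPeriod (nn_lt_minimalPeriod hper hβ)
      (Function.minimalPeriod_pos_of_mem_periodicPts hper)).1 h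

lemma mu_pow_nn_apply_pos (hper : β ∈ Function.periodicPts σ) (hβ : β ∈ BT σ T) :
    0 < mu σ T ((σ ^ nn σ T β) β) := by
  have hlt := nn_lt_minimalPeriod hper hβ
  exact mu_pos (Nat.sub_pos_of_lt hlt) (by rw [pow_minimalPeriod_sub_apply hlt.le]; exact hβ.1)

lemma mu_pow_nn_apply_add_nn_le_minimalPeriod (hper : β ∈ Function.periodicPts σ)
    (hβ : β ∈ BT σ T) :
    mu σ T ((σ ^ nn σ T β) β) + nn σ T β ≤ Function.minimalPeriod σ β := by
  have hlt := nn_lt_minimalPeriod hper hβ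
  exact Nat.add_le_of_le_sub hlt.le <|
    mu_le (Nat.sub_pos_of_lt hlt) (by rw [pow_minimalPeriod_sub_apply hlt.le]; exact hβ.1)

end Gaps

section Chains

lemma injOn_inv_pow_apply_of_chain {m : ℕ} (hend : σ x ∉ T) (hmem : ∀ i ≤ m, (σ⁻¹ ^ i) x ∈ T) :
    Set.InjOn (fun i => (σ⁻¹ ^ i) x) (Set.Iic m) := by
  intro i hi j hj hij
  wlog hlt : i < j generalizing i j
  · rcases (not_lt.1 hlt).eq_or_lt with heq | hgt
    · exact heq.symm
    · exact (this hj hi hij.symm hgt).symm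
  obtain ⟨k, rfl⟩ := Nat.exists_eq_add_of_lt hlt
  have hcycle : x = σ⁻¹ ((σ⁻¹ ^ k) x) := by
    rw [← Equiv.Perm.mul_apply, ← pow_succ']
    refine (σ⁻¹ ^ i).injective ?_
    rw [← Equiv.Perm.mul_apply, ← pow_add]
    exact hij
  have hσx : σ x = (σ⁻¹ ^ k) x := Equiv.Perm.eq_inv_iff_eq.1 hcycle
  exact absurd (hσx ▸ hmem k (by have := Set.mem_Iic.1 hj; omega)) hend

lemma ncard_chain {m : ℕ} (hend : σ x ∉ T) (hmem : ∀ i ≤ m, (σ⁻¹ ^ i) x ∈ T) :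
    {τ | ∃ i ≤ m, τ = (σ⁻¹ ^ i) x}.ncard = m + 1 := by
  have himage : {τ | ∃ i ≤ m, τ = (σ⁻¹ ^ i) x} = (fun i => (σ⁻¹ ^ i) x) '' Set.Iic m := by
    ext τ
    simp only [Set.mem_ofPred_eq, Set.mem_image, Set.mem_Iic, eq_comm]
  rw [himage, (injOn_inv_pow_apply_of_chain hend hmem).ncard_image, ← Finset.coe_Iic,
    Set.ncard_coe_finset, Nat.card_Iic]

lemma exists_chain_of_mem_tilde (hx : x ∈ tilde σ T) (hxT : x ∉ T) :
    ∃ y m, Odd (m + 1) ∧ σ y ∉ T ∧ (∀ i ≤ m, (σ⁻¹ ^ i) y ∈ T) ∧ x = (σ⁻¹ ^ (m + 1)) y := by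
  obtain ⟨_, ⟨y, m, hend, -, hmem, rfl⟩, hxC⟩ :
      ∃ C, ∃ _ : IsChainIn σ T C, x ∈ chainExt σ C := by
    simpa only [Set.mem_iUnion] using hx.resolve_left hxT
  have hxC' : x ∉ {τ | ∃ i ≤ m, τ = (σ⁻¹ ^ i) y} := by
    rintro ⟨i, hi, rfl⟩
    exact hxT (hmem i hi)
  rw [chainExt, ncard_chain hend hmem] at hxC
  split_ifs at hxC with hodd
  · obtain ⟨_, ⟨i, hi, rfl⟩, hix⟩ := hxC.resolve_left hxC'
    rw [← Equiv.Perm.mul_apply, ← pow_succ'] at hix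
    obtain rfl : i = m := by
      by_contra hne
      exact hxT (hix ▸ hmem (i + 1) (by omega))
    exact ⟨y, i, hodd, hend, hmem, hix.symm⟩
  · exact absurd hxC hxC'

lemma odd_mu_sub_one_of_mem_tilde (hx : x ∈ tilde σ T) (hxT : x ∉ T) : Odd (mu σ T x - 1) := by
  obtain ⟨y, m, hodd, hend, hmem, rfl⟩ := exists_chain_of_mem_tilde hx hxT
  have hmu : mu σ T ((σ⁻¹ ^ (m + 1)) y) = m + 2 := by
    refine mu_eq_of_forall_mem (by omega) ?_ fun i hi hilt => ?_
    · rwa [pow_succ', Equiv.Perm.mul_apply, pow_inv_pow_apply_of_le σ y le_rfl, Nat.sub_self,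
        pow_zero, Equiv.Perm.one_apply]
    · rw [pow_inv_pow_apply_of_le σ y (by omega)]
      exact hmem _ (by omega)
  rwa [hmu]

end Chains

section Signs

lemma not_orbit_subset_of_notMem {S : Set B} (hx : x ∉ S) : ¬ orbit σ x ⊆ S :=
  fun h => hx (h ⟨0, rfl⟩)

lemma epsT_of_notMem_tilde (hx : x ∉ tilde σ T) : epsT σ T x = 1 := by
  rw [epsT, if_neg (not_orbit_subset_of_notMem fun h => hx (Or.inl h)), if_neg hx]

lemma epsT_of_mem_tilde_of_notMem (hx : x ∈ tilde σ T) (hxT : x ∉ T) : epsT σ T x = -1 := by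
  rw [epsT, if_neg (not_orbit_subset_of_notMem hxT), if_pos hx,
    (odd_mu_sub_one_of_mem_tilde hx hxT).neg_one_pow]

variable [DecidableEq B]

lemma epsTf_self (hμ : 0 < mu σ T β) : epsTf σ T β β = -epsT σ T β :=
  if_pos ⟨0, hμ, rfl⟩

lemma epsTf_pow_apply_of_mu_le {n : ℕ} (hμ : mu σ T β ≤ n)
    (hn : n < Function.minimalPeriod σ β) :
    epsTf σ T β ((σ ^ n) β) = epsT σ T ((σ ^ n) β) := by
  refine if_neg ?_
  rintro ⟨i, hi, heq⟩
  have := (pow_apply_eq_pow_apply_iff_of_lt_minimalPeriod hn (by omega)).1 heq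
  omega

lemma epsTf_self_of_mem_BT (hper : β ∈ Function.periodicPts σ) (hβ : β ∈ BT σ T) :
    epsTf σ T β β = -epsT σ T β :=
  epsTf_self (mu_pos (nn_pos hper hβ) (pow_nn_apply_notMem hper hβ))

lemma epsTf_pow_nn_apply (hper : β ∈ Function.periodicPts σ) (hβ : β ∈ BT σ T) :
    epsTf σ T β ((σ ^ nn σ T β) β) = 1 := by
  rw [epsTf_pow_apply_of_mu_le (mu_le (nn_pos hper hβ) (pow_nn_apply_notMem hper hβ))
      (nn_lt_minimalPeriod hper hβ),
    epsT_of_notMem_tilde (pow_nn_apply_notMem_tilde hper hβ)]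

end Signs

section Evaluation

variable {p : ℕ} {ε : B → ℚ}

lemma Lfun_add (y : B) (κ κ' : B → ℚ) :
    Lfun σ p ε x y (κ + κ') = Lfun σ p ε x y κ + Lfun σ p ε x y κ' := by
  simp only [Lfun, Pi.add_apply, mul_add, Finset.sum_add_distrib]

lemma Lfun_smul (y : B) (c : ℚ) (κ : B → ℚ) :
    Lfun σ p ε x y (c • κ) = c * Lfun σ p ε x y κ := by
  simp only [Lfun, Pi.smul_apply, smul_eq_mul, Finset.mul_sum, mul_left_comm]

lemma Lfun_neg (y : B) (κ : B → ℚ) : Lfun σ p ε x y (-κ) = -Lfun σ p ε x y κ := by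
  simp only [Lfun, Pi.neg_apply, mul_neg, Finset.sum_neg_distrib]

lemma Lfun1_eq (hx : x ∈ Function.periodicPts σ) (κ : B → ℚ) :
    Lfun1 σ p ε x κ = Lfun σ p ε x ((σ ^ (Function.minimalPeriod σ x - 1)) x) κ := by
  rw [Lfun1, ← inv_pow_apply_of_pos σ x (Function.minimalPeriod_pos_of_mem_periodicPts hx),
    pow_minimalPeriod_apply]

variable [DecidableEq B]

lemma Lfun_e {y : B} {N a : ℕ} (hN : N < Function.minimalPeriod σ x) (ha : a ≤ N)
    (hy : (σ ^ a) x = y) : Lfun σ p ε x ((σ ^ N) x) (e y) = ε y * (p : ℚ) ^ a := by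
  subst hy
  rw [Lfun, steps0_pow_apply hN, Finset.sum_eq_single_of_mem a (Finset.mem_range_succ_iff.2 ha)]
  · rw [e, if_pos rfl, mul_one]
  · intro i hi hia
    have hne : (σ ^ i) x ≠ (σ ^ a) x := fun h => hia <|
      (pow_apply_eq_pow_apply_iff_of_lt_minimalPeriod
        ((Finset.mem_range_succ_iff.1 hi).trans_lt hN) (ha.trans_lt hN)).1 h
    rw [e, if_neg hne, mul_zero]

lemma Lfun_fH {N a : ℕ} (hN : N < Function.minimalPeriod σ x) (ha : nn σ T β + a ≤ N)
    (hβ : (σ ^ a) x = β) :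
    Lfun σ p ε x ((σ ^ N) x) (fH σ p T β) =
      (ε β - ε ((σ ^ nn σ T β) β)) * (p : ℚ) ^ (nn σ T β + a) := by
  have hβ' : (σ ^ (nn σ T β + a)) x = (σ ^ nn σ T β) β := by
    rw [pow_add, Equiv.Perm.mul_apply, hβ]
  rw [fH, Lfun_add, Lfun_neg, Lfun_smul, Lfun_e hN ha hβ', Lfun_e hN (by omega) hβ]
  ring

lemma Lfun_fB {N a : ℕ} (hN : N < Function.minimalPeriod σ x) (ha : nn σ T β + a ≤ N)
    (hβ : (σ ^ a) x = β) :
    Lfun σ p ε x ((σ ^ N) x) (fB σ p T β) =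
      (ε β + ε ((σ ^ nn σ T β) β)) * (p : ℚ) ^ (nn σ T β + a) := by
  have hβ' : (σ ^ (nn σ T β + a)) x = (σ ^ nn σ T β) β := by
    rw [pow_add, Equiv.Perm.mul_apply, hβ]
  rw [fB, Lfun_add, Lfun_smul, Lfun_e hN ha hβ', Lfun_e hN (by omega) hβ]
  ring

lemma LTf_fvec_of_notMem_tilde (hper : β ∈ Function.periodicPts σ) (hβ : β ∈ BT σ T)
    (hβt : β ∉ tilde σ T) :
    LTf σ p T β β (fvec σ p T β) = -2 * (p : ℚ) ^ nn σ T β := by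
  have hμ_pos := mu_pow_nn_apply_pos hper hβ
  have hμ_le := mu_pow_nn_apply_add_nn_le_minimalPeriod hper hβ
  rw [LTf, if_pos rfl, if_neg hβt, fvec, if_neg (not_orbit_subset_of_notMem hβt), if_neg hβt,
    ← Equiv.Perm.mul_apply (σ ^ _), ← pow_add, inv_pow_apply_of_pos σ β (by omega),
    Lfun_fH (β := β) (a := 0) (by omega) (by omega) rfl, epsTf_self_of_mem_BT hper hβ,
    epsT_of_notMem_tilde hβt, epsTf_pow_nn_apply hper hβ, add_zero]
  norm_num

lemma LTf_fvec_of_mem_tilde (hper : β ∈ Function.periodicPts σ) (hβ : β ∈ BT σ T)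
    (hβt : β ∈ tilde σ T) :
    LTf σ p T β β (fvec σ p T β) =
      -2 * (p : ℚ) ^ (nn σ T β +
        (Function.minimalPeriod σ β - (mu σ T ((σ ^ nn σ T β) β) + nn σ T β))) := by
  have hμ_pos := mu_pow_nn_apply_pos hper hβ
  have hμ_le := mu_pow_nn_apply_add_nn_le_minimalPeriod hper hβ
  have horbit : ¬ orbit σ β ⊆ tilde σ T :=
    fun h => pow_nn_apply_notMem_tilde hper hβ (h ⟨_, rfl⟩)
  have hperiod := minimalPeriod_pow_apply hper (mu σ T ((σ ^ nn σ T β) β) + nn σ T β)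
  have hper' : (σ ^ (mu σ T ((σ ^ nn σ T β) β) + nn σ T β)) β ∈ Function.periodicPts σ :=
    Function.minimalPeriod_pos_iff_mem_periodicPts.1 (by omega)
  rw [LTf, if_pos rfl, if_pos hβt, fvec, if_neg horbit, if_pos hβt,
    ← Equiv.Perm.mul_apply, ← pow_add, Lfun1_eq hper', Lfun_neg,
    Lfun_fB (by omega) (by omega) (pow_minimalPeriod_sub_apply hμ_le),
    epsTf_self_of_mem_BT hper hβ, epsT_of_mem_tilde_of_notMem hβt hβ.1,
    epsTf_pow_nn_apply hper hβ]
  norm_num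

lemma exists_LTf_fvec_eq (p : ℕ) (hper : β ∈ Function.periodicPts σ) (hβ : β ∈ BT σ T) :
    ∃ δ : ℕ, LTf σ p T β β (fvec σ p T β) = -2 * (p : ℚ) ^ (nn σ T β + δ) := by
  by_cases hβt : β ∈ tilde σ T
  · exact ⟨_, LTf_fvec_of_mem_tilde hper hβ hβt⟩
  · exact ⟨0, LTf_fvec_of_notMem_tilde hper hβ hβt⟩

end Evaluation

end GO

theorem statement11_general {B : Type*} [DecidableEq B] (σ : Equiv.Perm B) (p : ℕ) (hp : 0 < p)
    (T : Set B) (β : B) (hper : β ∈ Function.periodicPts σ) (hβ : β ∈ GO.BT σ T) :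
    (∃ δ : ℕ, GO.LTf σ p T β β (GO.fvec σ p T β) = -2 * (p : ℚ) ^ (GO.nn σ T β + δ)) ∧
    GO.LTf σ p T β β (GO.fvec σ p T β) < 0 ∧
    GO.fvec σ p T β ∉ GO.Df σ p T β := by
  obtain ⟨δ, hδ⟩ := GO.exists_LTf_fvec_eq p hper hβ
  have hneg : GO.LTf σ p T β β (GO.fvec σ p T β) < 0 := by
    rw [hδ]
    exact mul_neg_of_neg_of_pos (by norm_num) (by positivity)
  exact ⟨⟨δ, hδ⟩, hneg,
    fun hmem => hneg.not_ge (hmem β hβ.1 (GO.pow_nn_apply_ne hper hβ).symm)⟩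

/-- for `β ∈ 𝔹(T)`, there is `δ ≥ 0` with
`L_{T,f_β,β}(f_β(T)) = −2 p^{n_β+δ}`; in particular `L_{T,f_β,β}(f_β(T)) < 0` and
`f_β(T) ∉ 𝒟_{T,f_β}`. -/
theorem statement11 {B : Type*} [Fintype B] [DecidableEq B] [Nonempty B]
    (σ : Equiv.Perm B) (p : ℕ) (hp : p.Prime) (T : Set B) (β : B)
    (hβ : β ∈ GO.BT σ T) :
    (∃ δ : ℕ, GO.LTf σ p T β β (GO.fvec σ p T β) = -2 * (p : ℚ) ^ (GO.nn σ T β + δ)) ∧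
    GO.LTf σ p T β β (GO.fvec σ p T β) < 0 ∧
    GO.fvec σ p T β ∉ GO.Df σ p T β := by
  exact statement11_general σ p hp.pos T β (σ.injective.mem_periodicPts β) hβ
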